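/- In the setting of Jyotilingam's theorem with k = 1: if N is a finite length graded S-module with first syzygy bundle P_1 and Q is a bundle on P^n with M = H^l_*(Q) ≠ 0, 1 ≤ l ≤ n-2, then the map L_1 ⊗ M → L_0 ⊗ M induced by the resolution of N is not surjective, and hence H^{l+1}_*(P_1 ⊗ Q) ≠ 0. -/

import Mathlib

/-!
Background setup (the paper works on projective space `ℙⁿ` over a field `K`):
we encode a coherent sheaf on `ℙⁿ_K` by a module `M` over the homogeneous coordinate
ring `S = K[X₀,…,Xₙ]` (namely `M = Γ_*` of the sheaf), and the intermediate cohomology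
module `H^i_*(F) = ⊕_ν H^i(ℙⁿ, F(ν))` (for `i ≥ 1`) by the local cohomology module
`H^{i+1}_𝔪(M)` at the irrelevant maximal ideal `𝔪 = (X₀,…,Xₙ)`, to which it is
canonically isomorphic.
-/

open CategoryTheory TensorProduct

noncomputable section

/-- The homogeneous coordinate ring `S = K[X₀,…,Xₙ]` of `ℙⁿ`. -/
abbrev PolyS (K : Type) [Field K] (n : ℕ) : Type := MvPolynomial (Fin (n+1)) K

variable (K : Type) [Field K] (n : ℕ)

/-- The irrelevant maximal ideal `𝔪 = (X₀,…,Xₙ)` of `S`. -/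
def irrel : Ideal (PolyS K n) := Ideal.span (Set.range MvPolynomial.X)

/-- `H^i_*` of the sheaf on `ℙⁿ` associated to the `S`-module `M`, encoded (for `i ≥ 1`)
as the local cohomology module `H^{i+1}_𝔪(M)`. -/
def Hstar (i : ℕ) (M : Type) [AddCommGroup M] [Module (PolyS K n) M] :
    ModuleCat (PolyS K n) :=
  (localCohomology (irrel K n) (i+1)).obj (ModuleCat.of (PolyS K n) M)

/-- `M` is (the module of sections `Γ_*` of) an algebraic vector bundle on `ℙⁿ`:
finitely generated, depth `≥ 2` at `𝔪` (i.e. `H⁰_𝔪(M) = H¹_𝔪(M) = 0`, so `M = Γ_*(M̃)`),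
and locally free at every prime other than the irrelevant ideal. -/
structure IsBundleModule (M : Type) [AddCommGroup M] [Module (PolyS K n) M] : Prop where
  finite : Module.Finite (PolyS K n) M
  h0 : Subsingleton ((localCohomology (irrel K n) 0).obj (ModuleCat.of (PolyS K n) M))
  h1 : Subsingleton ((localCohomology (irrel K n) 1).obj (ModuleCat.of (PolyS K n) M))
  locFree : ∀ p : PrimeSpectrum (PolyS K n), p.asIdeal ≠ irrel K n →
    Module.Free (Localization.AtPrime p.asIdeal) (LocalizedModule p.asIdeal.primeCompl M)

/-- `M` represents a vector bundle of rank two on `ℙⁿ`. -/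
structure IsRankTwoBundleModule (M : Type) [AddCommGroup M] [Module (PolyS K n) M]
    extends IsBundleModule K n M : Prop where
  rank2 : ∀ p : PrimeSpectrum (PolyS K n), p.asIdeal ≠ irrel K n →
    Module.rank (Localization.AtPrime p.asIdeal) (LocalizedModule p.asIdeal.primeCompl M) = 2

/-- A finite length module which is moreover supported at the irrelevant ideal: the
(ungraded avatar of the) notion of a *graded* `S`-module of finite length. -/
def IsGradedFiniteLength (N : Type) [AddCommGroup N] [Module (PolyS K n) N] : Prop :=
  IsFiniteLength (PolyS K n) N ∧
    ∃ c : ℕ, (irrel K n) ^ c ≤ Module.annihilator (PolyS K n) N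

/-- A minimal graded free resolution `⋯ → L₁ → L₀ → N → 0` of an `S`-module `N`
(minimality: all differentials have entries in the maximal ideal `𝔪`).
Here `d i : L (i+1) → L i` and `P_k(N)`, the `k`-th syzygy module, is `range (d k)`,
i.e. the image of `f_{k+1} : L_{k+1} → L_k`. -/
structure MinimalResolution (N : Type) [AddCommGroup N] [Module (PolyS K n) N] where
  L : ℕ → Type
  [addCommGroup : ∀ i, AddCommGroup (L i)]
  [module : ∀ i, Module (PolyS K n) (L i)]
  free : ∀ i, Module.Free (PolyS K n) (L i)
  finite : ∀ i, Module.Finite (PolyS K n) (L i)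
  d : ∀ i : ℕ, L (i+1) →ₗ[PolyS K n] L i
  aug : L 0 →ₗ[PolyS K n] N
  aug_surjective : Function.Surjective aug
  exact0 : LinearMap.range (d 0) = LinearMap.ker aug
  exact : ∀ i : ℕ, LinearMap.range (d (i+1)) = LinearMap.ker (d i)
  minimal : ∀ i : ℕ, LinearMap.range (d i) ≤ (irrel K n) • (⊤ : Submodule (PolyS K n) (L i))
  minimal0 : LinearMap.ker aug ≤ (irrel K n) • (⊤ : Submodule (PolyS K n) (L 0))

attribute [instance] MinimalResolution.addCommGroup MinimalResolution.module

/-!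
Let `M = H^{i+1}_𝔪(Q)`. As `Q` is a bundle, for some `t` multiplication by any `s ∈ 𝔪 ^ t` on `Q`
factors through a finite free module; since `H^{i+1}_𝔪(S) = 0`, this gives `𝔪 ^ t M = 0`. For every
`S`-linear functor `F`, minimality of `d : L₁ → L₀` puts the image of `F(d)` into `𝔪 F(L₀)`, so if
`F(S) ≅ M ≠ 0` then `F(d)` is not surjective, by Nakayama. This applies to `F = - ⊗ M` and also to
`F = H^{i+1}_𝔪(- ⊗ Q)`. The complex `P₁ ⊗ Q → L₁ ⊗ Q → L₀ ⊗ Q → N ⊗ Q → 0` is exact up to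
`𝔪`-power torsion, which has no higher local cohomology, so if `H^{i+2}_𝔪(P₁ ⊗ Q)` vanished, then
`H^{i+1}_𝔪(L₁ ⊗ Q) → H^{i+1}_𝔪(L₀ ⊗ Q)` would be surjective.
-/

universe u v w

section HomologyClass

open HomologicalComplex

variable {R : Type u} [Ring R] {F G : CochainComplex (ModuleCat.{v} R) ℕ} {i : ℕ}

lemma cochainComplex_iCycles_injective : Function.Injective (F.iCycles i) :=
  (ModuleCat.mono_iff_injective _).1 inferInstance

variable (F i) in
/-- The cohomology class of a cocycle of a complex of modules, as a linear map. -/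
def homologyClass : LinearMap.ker (F.d i (i + 1)).hom →ₗ[R] F.homology i :=
  (F.liftCycles (ModuleCat.ofHom (LinearMap.ker (F.d i (i + 1)).hom).subtype) (i + 1) (by simp)
    (by ext z; exact z.2) ≫ F.homologyπ i).hom

lemma exists_iCycles_eq (z : LinearMap.ker (F.d i (i + 1)).hom) :
    ∃ c : F.cycles i, F.iCycles i c = z ∧ F.homologyπ i c = homologyClass F i z :=
  ⟨_, congr($(F.liftCycles_i (ModuleCat.ofHom (LinearMap.ker (F.d i (i + 1)).hom).subtype)
    (i + 1) (by simp) (by ext z; exact z.2)).hom z), rfl⟩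

lemma homologyClass_surjective : Function.Surjective (homologyClass F i) := fun e ↦ by
  obtain ⟨c, rfl⟩ := (ModuleCat.epi_iff_surjective (F.homologyπ i)).1 inferInstance e
  obtain ⟨c', hc', hc⟩ := exists_iCycles_eq
    ⟨F.iCycles i c, congr($(F.iCycles_d i (i + 1)).hom c)⟩
  exact ⟨_, hc.symm.trans (congrArg _ (cochainComplex_iCycles_injective hc'))⟩

lemma homologyClass_eq_zero_iff (j : ℕ) (hj : (ComplexShape.up ℕ).prev i = j)
    (z : LinearMap.ker (F.d i (i + 1)).hom) :
    homologyClass F i z = 0 ↔ ∃ w, F.d j i w = z := by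
  obtain ⟨c, hcz, hc⟩ := exists_iCycles_eq z
  rw [← hcz, ← hc]
  refine ⟨fun h ↦ ?_, fun ⟨w, hw⟩ ↦ ?_⟩
  · have hex := ShortComplex.exact_of_g_is_cokernel
      (ShortComplex.mk _ _ (F.toCycles_comp_homologyπ j i)) (F.homologyIsCokernel j i hj)
    obtain ⟨w, hw⟩ := (ShortComplex.moduleCat_exact_iff _).1 hex c h
    exact ⟨w, congr($(F.toCycles_i j i).hom w).symm.trans (congrArg (F.iCycles i) hw)⟩
  · have hwc : F.toCycles j i w = c :=
      cochainComplex_iCycles_injective (congr($(F.toCycles_i j i).hom w).trans hw)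
    exact hwc ▸ congr($(F.toCycles_comp_homologyπ j i).hom w)

lemma homologyMap_homologyClass (φ : F ⟶ G) (z : LinearMap.ker (F.d i (i + 1)).hom)
    (hz : φ.f i z ∈ LinearMap.ker (G.d i (i + 1)).hom) :
    homologyMap φ i (homologyClass F i z) = homologyClass G i ⟨φ.f i z, hz⟩ := by
  obtain ⟨c, hcz, hc⟩ := exists_iCycles_eq z
  obtain ⟨c', hcz', hc'⟩ := exists_iCycles_eq ⟨φ.f i z, hz⟩
  have hφ : cyclesMap φ i c = c' := cochainComplex_iCycles_injective <|
    (congr($(cyclesMap_i φ i).hom c).trans (congrArg (φ.f i) hcz)).trans hcz'.symm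
  rw [← hc, ← hc', ← hφ]
  exact congr($(homologyπ_naturality φ i).hom c)

end HomologyClass

section IsoExtNaturality

open Opposite HomologicalComplex

lemma homologyUnop_hom_naturality {V ι : Type*} [Category* V] [Abelian V] {c : ComplexShape ι}
    {F G : HomologicalComplex Vᵒᵖ c} (φ : F ⟶ G) (i : ι) :
    homologyMap ((unopFunctor V c).map φ.op) i ≫ (homologyUnop F i).hom =
      (homologyUnop G i).hom ≫ (homologyMap φ i).unop :=
  Quiver.Hom.op_inj (homologyOp_hom_naturality ((unopFunctor V c).map φ.op) i).symm

variable (R : Type*) [Ring R] {C : Type u} [Category.{v} C] [Abelian C] [Linear R C]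

/-- The map of complexes `Hom(F, Y) ⟶ Hom(F, Y')` induced by `g : Y ⟶ Y'`. -/
def linearYonedaObjPostcomp (F : ChainComplex C ℕ) {Y Y' : C} (g : Y ⟶ Y') :
    F.linearYonedaObj R Y ⟶ F.linearYonedaObj R Y' :=
  (unopFunctor _ _).map
    ((NatTrans.mapHomologicalComplex (((linearYoneda R C).map g).rightOp) _).app F).op

/-- The map of complexes `Hom(G, Y) ⟶ Hom(F, Y)` induced by `φ : F ⟶ G`. -/
def linearYonedaObjPrecomp {F G : ChainComplex C ℕ} (φ : F ⟶ G) (Y : C) :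
    G.linearYonedaObj R Y ⟶ F.linearYonedaObj R Y :=
  (unopFunctor _ _).map
    ((((linearYoneda R C).obj Y).rightOp.mapHomologicalComplex _).map φ).op

variable [EnoughProjectives C] {X X' Y Y' : C} (P : ProjectiveResolution X) (i : ℕ)

lemma isoExt_inv_naturality_right (g : Y ⟶ Y') :
    (P.isoExt i Y).inv ≫ ((Ext R C i).obj (op X)).map g =
      homologyMap (linearYonedaObjPostcomp R P.complex g) i ≫ (P.isoExt i Y').inv := by
  have hP := congrArg Quiver.Hom.unop ((Iso.eq_comp_inv _).1
    ((P.leftDerived_app_eq ((linearYoneda R C).map g).rightOp i).trans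
      (Category.assoc _ _ _).symm))
  have hU := homologyUnop_hom_naturality
    ((NatTrans.mapHomologicalComplex ((linearYoneda R C).map g).rightOp _).app P.complex) i
  calc
    _ = _ := Category.assoc _ _ _
    _ = _ := congrArg (_ ≫ ·) hP
    _ = _ := (Category.assoc _ _ _).symm
    _ = _ := congrArg (· ≫ _) hU.symm
    _ = _ := Category.assoc _ _ _

lemma isoExt_inv_naturality_left (P' : ProjectiveResolution X') {f : X' ⟶ X} (φ : P'.Hom P f) :
    (P.isoExt i Y).inv ≫ ((Ext R C i).map f.op).app Y =
      homologyMap (linearYonedaObjPrecomp R φ.hom Y) i ≫ (P'.isoExt i Y).inv := by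
  have hP := congrArg Quiver.Hom.unop (ProjectiveResolution.isoLeftDerivedObj_hom_naturality
    f P' P φ.hom (by simpa using φ.hom_f_zero_comp_π_f_zero) ((linearYoneda R C).obj Y).rightOp i)
  have hU := homologyUnop_hom_naturality
    ((((linearYoneda R C).obj Y).rightOp.mapHomologicalComplex _).map φ.hom) i
  calc
    _ = _ := Category.assoc _ _ _
    _ = _ := congrArg (_ ≫ ·) hP
    _ = _ := (Category.assoc _ _ _).symm
    _ = _ := congrArg (· ≫ _) hU.symm
    _ = _ := Category.assoc _ _ _

end IsoExtNaturality

section ExtClass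

open Opposite

variable {R : Type*} [Ring R] {C : Type u} [Category.{v} C] [Abelian C] [Linear R C]
  [EnoughProjectives C] {X X' Y Y' : C} (P : ProjectiveResolution X) {i : ℕ}

variable (R i Y) in
/-- The class in the derived functor `Ext R C i` of a cocycle `P.complex.X i ⟶ Y` of a projective
resolution `P` of `X`, as a linear map. -/
def extClass : LinearMap.ker (Linear.leftComp R Y (P.complex.d (i + 1) i)) →ₗ[R]
    ((Ext R C i).obj (op X)).obj Y :=
  (P.isoExt i Y).inv.hom ∘ₗ homologyClass (P.complex.linearYonedaObj R Y) i

lemma extClass_surjective : Function.Surjective (extClass R Y P i) :=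
  (P.isoExt i Y).symm.toLinearEquiv.surjective.comp homologyClass_surjective

lemma extClass_eq_zero_iff (j : ℕ) (hj : (ComplexShape.up ℕ).prev i = j)
    (z : LinearMap.ker (Linear.leftComp R Y (P.complex.d (i + 1) i))) :
    extClass R Y P i z = 0 ↔ ∃ w, P.complex.d i j ≫ w = z.1 :=
  (P.isoExt i Y).symm.toLinearEquiv.map_eq_zero_iff.trans
    (homologyClass_eq_zero_iff (F := P.complex.linearYonedaObj R Y) j hj z)

lemma map_extClass (g : Y ⟶ Y') (z : P.complex.X i ⟶ Y) (hz : P.complex.d (i + 1) i ≫ z = 0)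
    (hzg : P.complex.d (i + 1) i ≫ z ≫ g = 0) :
    ((Ext R C i).obj (op X)).map g (extClass R Y P i ⟨z, hz⟩) = extClass R Y' P i ⟨z ≫ g, hzg⟩ := by
  have h := congr($(isoExt_inv_naturality_right R P i g).hom (homologyClass _ i ⟨z, hz⟩))
  have h' := congrArg (P.isoExt i Y').inv.hom
    (homologyMap_homologyClass (linearYonedaObjPostcomp R P.complex g) ⟨z, hz⟩ hzg)
  exact h.trans h'

lemma map_op_app_extClass (P' : ProjectiveResolution X') {f : X' ⟶ X} (φ : P'.Hom P f)
    (z : P.complex.X i ⟶ Y) (hz : P.complex.d (i + 1) i ≫ z = 0)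
    (hφz : P'.complex.d (i + 1) i ≫ φ.hom.f i ≫ z = 0) :
    ((Ext R C i).map f.op).app Y (extClass R Y P i ⟨z, hz⟩) =
      extClass R Y P' i ⟨φ.hom.f i ≫ z, hφz⟩ := by
  have h := congr($(isoExt_inv_naturality_left R P i P' φ).hom (homologyClass _ i ⟨z, hz⟩))
  have h' := congrArg (P'.isoExt i Y).inv.hom
    (homologyMap_homologyClass (linearYonedaObjPrecomp R φ.hom Y) ⟨z, hz⟩ hφz)
  exact h.trans h'

end ExtClass

section ExtComparison

open Opposite CochainComplex.HomComplex

variable {R : Type*} [Ring R] {C : Type u} [Category.{v} C] [Abelian C] [Linear R C]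
  [HasExt.{w} C] {X X' Y Y' : C} (P : ProjectiveResolution X) {i : ℕ}

lemma extMk_zero_eq_zero_iff (z : P.complex.X 0 ⟶ Y) (hz : P.complex.d 1 0 ≫ z = 0) :
    P.extMk z 1 rfl hz = 0 ↔ z = 0 := by
  have h1 : Limits.IsZero (P.cochainComplex.X 1) := P.cochainComplex.isZero_of_isStrictlyLE 0 1
  rw [← P.extEquivCohomologyClass.apply_eq_iff_eq, P.extEquivCohomologyClass_extMk,
    P.extEquivCohomologyClass_zero, CohomologyClass.mk_eq_zero_iff,
    Cocycle.toSingleMk_mem_coboundaries_iff _ _ _ _ _ 1 (by simp)]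
  refine ⟨fun ⟨g, hg⟩ ↦ ?_, fun h ↦ ⟨0, by simp [h]⟩⟩
  rw [h1.eq_of_src g 0, Limits.comp_zero] at hg
  exact (cancel_epi (P.cochainComplexXIso (-(0 : ℕ)) 0 rfl).hom).1 (hg.symm.trans (by simp))

variable (R i Y) in
/-- The class in Yoneda `Ext` of a cocycle of a projective resolution, as an additive map. -/
def extMkHom : LinearMap.ker (Linear.leftComp R Y (P.complex.d (i + 1) i)) →+
    Abelian.Ext X Y i where
  toFun z := P.extMk z.1 (i + 1) rfl z.2
  map_zero' := P.extMk_zero _ _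
  map_add' z z' := (P.add_extMk z.1 z'.1 _ rfl z.2 z'.2).symm

lemma extMkHom_surjective : Function.Surjective (extMkHom R Y P i) := fun e ↦ by
  obtain ⟨z, hz, rfl⟩ := P.extMk_surjective e (i + 1) rfl
  exact ⟨⟨z, hz⟩, rfl⟩

variable [EnoughProjectives C]

lemma ker_extMkHom : (extMkHom R Y P i).ker = (extClass R Y P i).toAddMonoidHom.ker := by
  ext ⟨z, hz⟩
  rcases i with - | i
  · refine (extMk_zero_eq_zero_iff P z hz).trans (Iff.trans ?_
      (extClass_eq_zero_iff P 0 (by simp) ⟨z, hz⟩).symm)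
    simp [eq_comm]
  · exact (P.extMk_eq_zero_iff z _ rfl hz i rfl).trans
      (extClass_eq_zero_iff P i (CochainComplex.prev_nat_succ i) ⟨z, hz⟩).symm

variable (R i Y) in
/-- Yoneda `Ext` agrees with the derived functor `Ext R C i`. -/
def extAddEquiv : Abelian.Ext X Y i ≃+ ((Ext R C i).obj (op X)).obj Y :=
  ((QuotientAddGroup.quotientKerEquivOfSurjective _ (extMkHom_surjective (R := R) P)).symm.trans
    (QuotientAddGroup.quotientAddEquivOfEq (ker_extMkHom P))).trans
      (QuotientAddGroup.quotientKerEquivOfSurjective (extClass R Y P i).toAddMonoidHom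
        (extClass_surjective P))

lemma extAddEquiv_extMk (z : P.complex.X i ⟶ Y) (hz : P.complex.d (i + 1) i ≫ z = 0) :
    extAddEquiv R Y P i (P.extMk z (i + 1) rfl hz) = extClass R Y P i ⟨z, hz⟩ := by
  have h : (QuotientAddGroup.quotientKerEquivOfSurjective _ (extMkHom_surjective (R := R) P)).symm
      (P.extMk z (i + 1) rfl hz) = QuotientAddGroup.mk ⟨z, hz⟩ :=
    (AddEquiv.symm_apply_eq _).2 rfl
  simp only [extAddEquiv, AddEquiv.trans_apply, h]
  rfl

lemma extAddEquiv_comp_mk₀ (g : Y ⟶ Y') (e : Abelian.Ext X Y i) :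
    extAddEquiv R Y' P i (e.comp (.mk₀ g) (add_zero i)) =
      ((Ext R C i).obj (op X)).map g (extAddEquiv R Y P i e) := by
  obtain ⟨z, hz, rfl⟩ := P.extMk_surjective e (i + 1) rfl
  rw [P.extMk_comp_mk₀, extAddEquiv_extMk, extAddEquiv_extMk]
  exact (map_extClass P g z hz _).symm

lemma extAddEquiv_mk₀_comp (P' : ProjectiveResolution X') (f : X' ⟶ X) (e : Abelian.Ext X Y i) :
    extAddEquiv R Y P' i ((Abelian.Ext.mk₀ f).comp e (zero_add i)) =
      ((Ext R C i).map f.op).app Y (extAddEquiv R Y P i e) := by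
  obtain ⟨z, hz, rfl⟩ := P.extMk_surjective e (i + 1) rfl
  let φ : P'.Hom P f := ⟨ProjectiveResolution.lift f P' P, by
    rw [ChainComplex.single₀_map_f_zero]
    exact ProjectiveResolution.lift_commutes_zero f P' P⟩
  rw [P.mk₀_comp_extMk z _ rfl hz φ, extAddEquiv_extMk, extAddEquiv_extMk]
  exact (map_op_app_extClass P P' φ z hz _).symm

lemma extAddEquiv_smul {R : Type*} [CommRing R] [Linear R C] (r : R) (e : Abelian.Ext X Y i) :
    extAddEquiv R Y P i (r • e) = r • extAddEquiv R Y P i e := by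
  obtain ⟨z, hz, rfl⟩ := P.extMk_surjective e (i + 1) rfl
  have h : r • P.extMk z (i + 1) rfl hz =
      (P.extMk z (i + 1) rfl hz).comp (.mk₀ (r • 𝟙 Y)) (add_zero i) :=
    Abelian.Ext.smul_eq_comp_mk₀ _ r
  have hrz : P.complex.d (i + 1) i ≫ z ≫ (r • 𝟙 Y) = 0 := by simp [hz]
  rw [h, P.extMk_comp_mk₀, extAddEquiv_extMk P _ hrz, extAddEquiv_extMk, ← map_smul]
  exact congrArg _ (Subtype.ext (by simp))

end ExtComparison

section PowTorsion

variable {R : Type u} [CommRing R] (J : Ideal R) (M : Type*) [AddCommGroup M] [Module R M]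

/-- A module is `J`-power torsion if each of its elements is killed by a power of the
ideal `J`. -/
def IsPowTorsion : Prop := ∀ x : M, ∃ t : ℕ, ∀ r ∈ J ^ t, r • x = 0

/-- The submodule of the elements killed by a power of the ideal `J`. -/
def powTorsion : Submodule R M where
  carrier := {x | ∃ t : ℕ, ∀ r ∈ J ^ t, r • x = 0}
  zero_mem' := ⟨0, fun r _ ↦ smul_zero r⟩
  add_mem' := fun ⟨s, hs⟩ ⟨t, ht⟩ ↦ ⟨s + t, fun r hr ↦ by
    rw [smul_add, hs r (Ideal.pow_le_pow_right (Nat.le_add_right s t) hr),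
      ht r (Ideal.pow_le_pow_right (Nat.le_add_left t s) hr), add_zero]⟩
  smul_mem' a _ := fun ⟨s, hs⟩ ↦ ⟨s, fun r hr ↦ by rw [smul_comm, hs r hr, smul_zero]⟩

lemma isPowTorsion_powTorsion : IsPowTorsion J (powTorsion J M) := fun ⟨_, t, ht⟩ ↦
  ⟨t, fun r hr ↦ Subtype.ext (ht r hr)⟩

variable {J M} {M' : Type*} [AddCommGroup M'] [Module R M']

lemma IsPowTorsion.of_surjective (hM : IsPowTorsion J M) {g : M →ₗ[R] M'}
    (hg : Function.Surjective g) : IsPowTorsion J M' := fun y ↦ by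
  obtain ⟨x, rfl⟩ := hg y
  obtain ⟨t, ht⟩ := hM x
  exact ⟨t, fun r hr ↦ by rw [← map_smul, ht r hr, map_zero]⟩

lemma isPowTorsion_of_pow_le_annihilator {c : ℕ} (h : J ^ c ≤ Module.annihilator R M) :
    IsPowTorsion J M :=
  fun x ↦ ⟨c, fun _ hr ↦ Module.mem_annihilator.1 (h hr) x⟩

lemma IsPowTorsion.exists_pow_smul_eq_zero (hM : IsPowTorsion J M) [Module.Finite R M']
    (g : M' →ₗ[R] M) : ∃ c : ℕ, ∀ r ∈ J ^ c, ∀ x, r • g x = 0 := by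
  obtain ⟨s, hs⟩ := Module.Finite.fg_top (R := R) (M := M')
  choose f hf using fun x ↦ hM (g x)
  refine ⟨s.sup f, fun r hr x ↦ ?_⟩
  have hle : Submodule.span R s ≤ LinearMap.ker (r • g) := Submodule.span_le.2 fun y hy ↦
    hf y r (Ideal.pow_le_pow_right (Finset.le_sup hy) hr)
  exact hle (hs ▸ Submodule.mem_top)

lemma exists_comap_subtype_pow_le [IsNoetherianRing R] (J I : Ideal R) (c : ℕ) :
    ∃ m : ℕ, Submodule.comap (Submodule.subtype I) (J ^ m) ≤ J ^ c • ⊤ := by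
  obtain ⟨k, hk⟩ := Ideal.exists_pow_inf_eq_pow_smul J (I : Submodule R R)
  refine ⟨k + c, fun x hx ↦ ?_⟩
  have h := hk (k + c) (Nat.le_add_right k c)
  simp only [smul_eq_mul, Ideal.mul_top, Nat.add_sub_cancel_left] at h
  have hx' : (x : R) ∈ (J ^ c • ⊤ : Submodule R I).map (Submodule.subtype I) := by
    rw [Submodule.map_smul'', Submodule.map_top, Submodule.range_subtype]
    exact Ideal.mul_mono_right inf_le_right (h.le ⟨hx, x.2⟩)
  obtain ⟨y, hy, hyx⟩ := hx'
  rwa [← Subtype.ext hyx]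

instance [IsNoetherianRing R] (E : Type u) [AddCommGroup E] [Module R E] [Module.Injective R E] :
    Module.Injective R (powTorsion J E) := by
  refine Module.Baer.injective fun I g ↦ ?_
  obtain ⟨c, hc⟩ := (isPowTorsion_powTorsion J E).exists_pow_smul_eq_zero g
  obtain ⟨m, hm⟩ := exists_comap_subtype_pow_le J I c
  have hg : Submodule.comap (Submodule.subtype I) (J ^ m) ≤
      LinearMap.ker ((powTorsion J E).subtype ∘ₗ g) :=
    hm.trans <| Submodule.smul_le.2 fun r hr x _ ↦ by
      rw [LinearMap.mem_ker, LinearMap.comp_apply, map_smul, hc r hr, map_zero]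
  have hj : Function.Injective (Submodule.mapQ (Submodule.comap (Submodule.subtype I) (J ^ m))
      (J ^ m) (Submodule.subtype I) le_rfl) :=
    LinearMap.ker_eq_bot.1 <| by rw [Submodule.ker_mapQ, Submodule.mkQ_map_self]
  obtain ⟨h, hh⟩ := Module.Injective.out _ hj (Submodule.liftQ _ _ hg)
  have hmem (y : R) : h (Submodule.Quotient.mk y) ∈ powTorsion J E := ⟨m, fun r hr ↦ by
    rw [← map_smul, ← Submodule.Quotient.mk_smul, smul_eq_mul,
      (Submodule.Quotient.mk_eq_zero _).2 (Ideal.mul_mem_right y _ hr), map_zero]⟩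
  exact ⟨(h ∘ₗ Submodule.mkQ _).codRestrict _ hmem, fun x hx ↦
    Subtype.ext (hh (Submodule.Quotient.mk ⟨x, hx⟩))⟩

end PowTorsion

section LocalCohomology

open Opposite Limits localCohomology

variable {R : Type u} [CommRing R] (J : Ideal R)

/-- The cyclic module `R ⧸ J ^ t`, whose `Ext` modules define local cohomology with support
in `J`. -/
abbrev quotientPow (t : ℕ) : ModuleCat.{u} R := ModuleCat.of R (R ⧸ J ^ t)

/-- The projection `R ⧸ J ^ t ⟶ R ⧸ J ^ s` for `s ≤ t`. -/
def quotientPowMap {s t : ℕ} (h : s ≤ t) : quotientPow J t ⟶ quotientPow J s :=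
  ModuleCat.ofHom <| Submodule.mapQ _ _ LinearMap.id (Ideal.pow_le_pow_right h)

lemma smul_id_quotientPow {t : ℕ} {r : R} (hr : r ∈ J ^ t) : r • 𝟙 (quotientPow J t) = 0 := by
  ext
  change Ideal.Quotient.mk (J ^ t) (r * 1) = 0
  rwa [mul_one, Ideal.Quotient.eq_zero_iff_mem]

/-- The canonical map from `Ext (R ⧸ J ^ t) M i` to the colimit defining local cohomology. -/
def extToLocalCohomology (M : ModuleCat.{u} R) (i t : ℕ) :
    Abelian.Ext (quotientPow J t) M i →ₗ[R] (localCohomology J i).obj M where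
  toFun e := ((colimit.ι (diagram (idealPowersDiagram J) i) (op (op t))).app M).hom
    (extAddEquiv R M (projectiveResolution (quotientPow J t)) i e)
  map_add' e e' := by
    rw [map_add]
    exact map_add _ _ _
  map_smul' r e := by
    rw [extAddEquiv_smul]
    exact map_smul _ _ _

instance : PreservesFilteredColimitsOfSize.{0, 0} (forget (ModuleCat.{u} R)) :=
  preservesSmallestFilteredColimits_of_preservesFilteredColimits.{u, u} _

variable {J} {M N : ModuleCat.{u} R} {i : ℕ}

lemma exists_extToLocalCohomology_eq (x : (localCohomology J i).obj M) :
    ∃ t e, extToLocalCohomology J M i t e = x := by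
  obtain ⟨t, e, rfl⟩ := Concrete.isColimit_exists_rep _ (isColimitOfPreserves
    ((evaluation _ _).obj M) (colimit.isColimit (diagram (idealPowersDiagram J) i))) x
  obtain ⟨e, rfl⟩ :=
    (extAddEquiv R M (projectiveResolution (quotientPow J t.unop.unop)) i).surjective e
  exact ⟨t.unop.unop, e, rfl⟩

lemma extToLocalCohomology_mk₀_comp {s t : ℕ} (h : s ≤ t)
    (e : Abelian.Ext (quotientPow J s) M i) :
    extToLocalCohomology J M i t ((Abelian.Ext.mk₀ (quotientPowMap J h)).comp e (zero_add i)) =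
      extToLocalCohomology J M i s e :=
  (congrArg (colimit.ι (diagram (idealPowersDiagram J) i) (op (op t)) |>.app M).hom
    (extAddEquiv_mk₀_comp _ _ _ e)).trans
    (congrArg (fun f ↦ (f.app M).hom (extAddEquiv R M (projectiveResolution _) i e))
      (colimit.w (diagram (idealPowersDiagram J) i) (homOfLE h).op.op))

lemma exists_mk₀_comp_eq {s s' : ℕ} {e : Abelian.Ext (quotientPow J s) M i}
    {e' : Abelian.Ext (quotientPow J s') M i}
    (he : extToLocalCohomology J M i s e = extToLocalCohomology J M i s' e') :
    ∃ (t : ℕ) (h : s ≤ t) (h' : s' ≤ t),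
      (Abelian.Ext.mk₀ (quotientPowMap J h)).comp e (zero_add i) =
        (Abelian.Ext.mk₀ (quotientPowMap J h')).comp e' (zero_add i) := by
  obtain ⟨t, f, f', h⟩ := Concrete.isColimit_exists_of_rep_eq _ (isColimitOfPreserves
    ((evaluation _ _).obj M) (colimit.isColimit (diagram (idealPowersDiagram J) i)))
    (i := op (op s)) (j := op (op s')) _ _ he
  refine ⟨t.unop.unop, leOfHom f.unop.unop, leOfHom f'.unop.unop,
    (extAddEquiv R M (projectiveResolution _) i).injective ?_⟩
  exact (extAddEquiv_mk₀_comp _ _ _ e).trans (h.trans (extAddEquiv_mk₀_comp _ _ _ e').symm)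

lemma exists_mk₀_comp_eq_zero {s : ℕ} {e : Abelian.Ext (quotientPow J s) M i}
    (he : extToLocalCohomology J M i s e = 0) :
    ∃ (t : ℕ) (h : s ≤ t),
      (Abelian.Ext.mk₀ (quotientPowMap J h)).comp e (zero_add i) = 0 := by
  obtain ⟨t, h, _, he⟩ :=
    exists_mk₀_comp_eq (he.trans (map_zero (extToLocalCohomology J M i s)).symm)
  exact ⟨t, h, he.trans (Abelian.Ext.comp_zero _ _ _ _ _)⟩

lemma map_extToLocalCohomology (g : M ⟶ N) {t : ℕ} (e : Abelian.Ext (quotientPow J t) M i) :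
    (localCohomology J i).map g (extToLocalCohomology J M i t e) =
      extToLocalCohomology J N i t (e.comp (.mk₀ g) (add_zero i)) :=
  (congrArg (fun f ↦ f.hom (extAddEquiv R M (projectiveResolution _) i e))
    ((colimit.ι (diagram (idealPowersDiagram J) i) (op (op t))).naturality g)).symm.trans
    (congrArg (colimit.ι (diagram (idealPowersDiagram J) i) (op (op t)) |>.app N).hom
      (extAddEquiv_comp_mk₀ _ g e).symm)

lemma exists_extToLocalCohomology_eq_of_map_eq_zero {g : M ⟶ N}
    {x : (localCohomology J i).obj M} (hx : (localCohomology J i).map g x = 0) :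
    ∃ t e, extToLocalCohomology J M i t e = x ∧ e.comp (.mk₀ g) (add_zero i) = 0 := by
  obtain ⟨s, e, rfl⟩ := exists_extToLocalCohomology_eq x
  rw [map_extToLocalCohomology] at hx
  obtain ⟨t, h, he⟩ := exists_mk₀_comp_eq_zero hx
  exact ⟨t, (Abelian.Ext.mk₀ (quotientPowMap J h)).comp e (zero_add i),
    extToLocalCohomology_mk₀_comp h e,
    (Abelian.Ext.comp_assoc_of_third_deg_zero _ _ _ _).trans he⟩

instance : (localCohomology J i).Additive where
  map_add {M N f g} := by
    ext x
    obtain ⟨t, e, rfl⟩ := exists_extToLocalCohomology_eq x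
    simp only [ModuleCat.hom_add, LinearMap.add_apply, map_extToLocalCohomology,
      Abelian.Ext.mk₀_add, Abelian.Ext.comp_add, map_add]

instance : (localCohomology J i).Linear R where
  map_smul g r := by
    ext x
    obtain ⟨t, e, rfl⟩ := exists_extToLocalCohomology_eq x
    simp only [ModuleCat.hom_smul, LinearMap.smul_apply, map_extToLocalCohomology,
      Abelian.Ext.mk₀_smul, Abelian.Ext.comp_smul, map_smul]

lemma isPowTorsion_localCohomology : IsPowTorsion J ((localCohomology J i).obj M) := fun x ↦ by
  obtain ⟨t, e, rfl⟩ := exists_extToLocalCohomology_eq x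
  refine ⟨t, fun r hr ↦ ?_⟩
  have he : r • e = 0 := by
    rw [← e.mk₀_id_comp, ← Abelian.Ext.smul_comp, ← Abelian.Ext.mk₀_smul,
      smul_id_quotientPow J hr, Abelian.Ext.mk₀_zero, Abelian.Ext.zero_comp]
  rw [← map_smul, he, map_zero]

lemma localCohomology_zero_map_injective {f : M ⟶ N} (hf : Function.Injective f) :
    Function.Injective ((localCohomology J 0).map f) := by
  refine (injective_iff_map_eq_zero _).2 fun x hx ↦ ?_
  obtain ⟨t, e, rfl, he⟩ := exists_extToLocalCohomology_eq_of_map_eq_zero hx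
  obtain ⟨φ, rfl⟩ := (Abelian.Ext.mk₀_bijective _ _).2 e
  have := (ModuleCat.mono_iff_injective f).2 hf
  rw [Abelian.Ext.mk₀_comp_mk₀, Abelian.Ext.mk₀_eq_zero_iff] at he
  rw [Limits.zero_of_comp_mono f he, Abelian.Ext.mk₀_zero, map_zero]

lemma subsingleton_localCohomology_of_injective [Injective M] :
    Subsingleton ((localCohomology J (i + 1)).obj M) := by
  refine subsingleton_of_forall_eq 0 fun x ↦ ?_
  obtain ⟨t, e, rfl⟩ := exists_extToLocalCohomology_eq x
  rw [e.eq_zero_of_injective, map_zero]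

variable {S : ShortComplex (ModuleCat.{u} R)} (hS : S.ShortExact)

include hS

lemma localCohomology_exact :
    Function.Exact ((localCohomology J i).map S.f) ((localCohomology J i).map S.g) := fun x ↦ by
  refine ⟨fun hx ↦ ?_, ?_⟩
  · obtain ⟨t, e, rfl, he⟩ := exists_extToLocalCohomology_eq_of_map_eq_zero hx
    obtain ⟨e, rfl⟩ := Abelian.Ext.covariant_sequence_exact₂ _ hS e he
    exact ⟨extToLocalCohomology J _ i t e, map_extToLocalCohomology _ e⟩
  · rintro ⟨x, rfl⟩
    rw [← ConcreteCategory.comp_apply, ← Functor.map_comp, S.zero, Functor.map_zero]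
    rfl

lemma localCohomology_map_surjective
    (hf : Function.Injective ((localCohomology J (i + 1)).map S.f)) :
    Function.Surjective ((localCohomology J i).map S.g) := fun x ↦ by
  obtain ⟨s, e, rfl⟩ := exists_extToLocalCohomology_eq x
  have hδ : extToLocalCohomology J _ (i + 1) s (e.comp hS.extClass rfl) = 0 := by
    refine hf ?_
    rw [map_extToLocalCohomology, Abelian.Ext.comp_assoc_of_third_deg_zero, hS.extClass_comp,
      Abelian.Ext.comp_zero, map_zero, map_zero]
  obtain ⟨t, h, he⟩ := exists_mk₀_comp_eq_zero hδ
  rw [← Abelian.Ext.comp_assoc _ _ _ (zero_add i) rfl (by omega)] at he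
  obtain ⟨e', he'⟩ := Abelian.Ext.covariant_sequence_exact₃ _ hS _ _ he
  refine ⟨extToLocalCohomology J _ i t e', ?_⟩
  rw [map_extToLocalCohomology, he', extToLocalCohomology_mk₀_comp]

lemma localCohomology_map_injective
    (hg : Function.Surjective ((localCohomology J i).map S.g)) :
    Function.Injective ((localCohomology J (i + 1)).map S.f) := by
  refine (injective_iff_map_eq_zero _).2 fun x hx ↦ ?_
  obtain ⟨s, e, rfl, he⟩ := exists_extToLocalCohomology_eq_of_map_eq_zero hx
  obtain ⟨e, rfl⟩ := Abelian.Ext.covariant_sequence_exact₁ _ hS e he rfl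
  obtain ⟨y, hy⟩ := hg (extToLocalCohomology J _ i s e)
  obtain ⟨s', e', rfl⟩ := exists_extToLocalCohomology_eq y
  rw [map_extToLocalCohomology] at hy
  obtain ⟨t, h', h, he'⟩ := exists_mk₀_comp_eq hy
  rw [← extToLocalCohomology_mk₀_comp h,
    ← Abelian.Ext.comp_assoc _ _ _ (zero_add i) rfl (by omega), ← he',
    ← Abelian.Ext.comp_assoc_of_third_deg_zero, Abelian.Ext.comp_assoc_of_second_deg_zero,
    hS.comp_extClass, Abelian.Ext.comp_zero, map_zero]

end LocalCohomology

section WeaklyRegular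

open RingTheory.Sequence

variable {R : Type u} [CommRing R] {J : Ideal R}

lemma subsingleton_localCohomology_of_map_smul_injective {M : ModuleCat.{u} R} {i : ℕ} {r : R}
    (hr : r ∈ J) (h : Function.Injective ((localCohomology J i).map (r • 𝟙 M))) :
    Subsingleton ((localCohomology J i).obj M) := by
  refine subsingleton_of_forall_eq 0 fun x ↦ ?_
  have hreg : IsSMulRegular ((localCohomology J i).obj M) r := by
    rw [Functor.map_smul, CategoryTheory.Functor.map_id] at h
    exact h
  obtain ⟨t, ht⟩ := isPowTorsion_localCohomology x
  exact (hreg.pow t).right_eq_zero_of_smul (ht _ (Ideal.pow_mem_pow hr t))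

theorem subsingleton_localCohomology_of_isWeaklyRegular {rs : List R} (hrs : ∀ r ∈ rs, r ∈ J)
    {M : ModuleCat.{u} R} (hM : IsWeaklyRegular M rs) {i : ℕ} (hi : i < rs.length) :
    Subsingleton ((localCohomology J i).obj M) := by
  induction rs generalizing M i with
  | nil => simp at hi
  | cons r rs ih =>
    obtain ⟨hr, hM⟩ := (isWeaklyRegular_cons_iff M r rs).1 hM
    simp only [List.forall_mem_cons] at hrs
    refine subsingleton_localCohomology_of_map_smul_injective hrs.1 ?_
    rcases i with - | i
    · exact localCohomology_zero_map_injective hr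
    · have : Subsingleton ((localCohomology J i).obj (M.smulShortComplex r).X₃) :=
        ih hrs.2 hM (Nat.lt_of_succ_lt_succ hi)
      exact localCohomology_map_injective hr.smulShortComplex_shortExact
        (Function.surjective_to_subsingleton _)

variable {σ A : Type*} [CommRing A]

lemma isSMulRegular_X_quotient_span_X {s : Set σ} {k : σ} (hk : k ∉ s) :
    IsSMulRegular (MvPolynomial σ A ⧸ Ideal.span (MvPolynomial.X (R := A) '' s))
      (MvPolynomial.X k : MvPolynomial σ A) := by
  refine (isSMulRegular_quotient_iff_mem_of_smul_mem _ _).2 fun p hp ↦ ?_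
  rw [smul_eq_mul, MvPolynomial.mem_ideal_span_X_image] at hp
  rw [MvPolynomial.mem_ideal_span_X_image]
  intro m hm
  obtain ⟨j, hj, hmj⟩ := hp (Finsupp.single k 1 + m) (by
    rwa [MvPolynomial.mem_support_iff, MvPolynomial.coeff_X_mul, ← MvPolynomial.mem_support_iff])
  have hkj : k ≠ j := fun h ↦ hk (h ▸ hj)
  exact ⟨j, hj, by simpa [hkj] using hmj⟩

lemma isWeaklyRegular_map_X {l : List σ} (hl : l.Nodup) :
    IsWeaklyRegular (MvPolynomial σ A) (l.map (MvPolynomial.X (R := A))) := by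
  refine (isWeaklyRegular_iff _ _).2 fun i hi ↦ ?_
  have hspan : Ideal.ofList ((l.map (MvPolynomial.X (R := A))).take i) =
      Ideal.span (MvPolynomial.X '' {j | j ∈ l.take i}) := by
    simp [Ideal.ofList, ← List.map_take, Set.image]
  rw [Ideal.smul_eq_mul, Ideal.mul_top, hspan, List.getElem_map]
  refine isSMulRegular_X_quotient_span_X fun h ↦ ?_
  obtain ⟨j, hj, hji⟩ := List.mem_take_iff_getElem.1 h
  have := hl.getElem_inj_iff.1 hji
  omega

theorem subsingleton_localCohomology_of_X_mem {σ A : Type u} [Fintype σ] [CommRing A]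
    {J : Ideal (MvPolynomial σ A)} (hJ : ∀ k, MvPolynomial.X k ∈ J) {i : ℕ}
    (hi : i < Fintype.card σ) :
    Subsingleton ((localCohomology J i).obj (.of _ (MvPolynomial σ A))) := by
  have hX : ∀ r ∈ Finset.univ.toList.map MvPolynomial.X, r ∈ J := fun r hr ↦ by
    obtain ⟨k, -, rfl⟩ := List.mem_map.1 hr
    exact hJ k
  exact subsingleton_localCohomology_of_isWeaklyRegular hX
    (isWeaklyRegular_map_X (Finset.nodup_toList _)) (by simpa using hi)

end WeaklyRegular

section ShortExact

variable {R : Type u} [Ring R] {A B C : Type v} [AddCommGroup A] [Module R A] [AddCommGroup B]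
  [Module R B] [AddCommGroup C] [Module R C] {f : A →ₗ[R] B} {g : B →ₗ[R] C}

lemma shortExact_ofHom (h : Function.Exact f g) (hf : Function.Injective f)
    (hg : Function.Surjective g) :
    (ShortComplex.mk (ModuleCat.ofHom f) (ModuleCat.ofHom g)
      (ModuleCat.hom_ext h.linearMap_comp_eq_zero)).ShortExact :=
  .mk' ((ShortComplex.ShortExact.moduleCat_exact_iff_function_exact _).2 h)
    ((ModuleCat.mono_iff_injective _).2 hf) ((ModuleCat.epi_iff_surjective _).2 hg)

lemma shortExact_range_subtype (h : Function.Exact f g) (hg : Function.Surjective g) :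
    (ShortComplex.mk (ModuleCat.ofHom (LinearMap.range f).subtype) (ModuleCat.ofHom g)
      (ModuleCat.hom_ext <| LinearMap.ext fun x ↦ (h x).2 x.2)).ShortExact :=
  shortExact_ofHom (LinearMap.exact_iff.2 (by rw [Submodule.range_subtype, h.linearMap_ker_eq]))
    (Submodule.subtype_injective _) hg

end ShortExact

section TorsionModules

variable {R : Type u} [CommRing R] {J : Ideal R}

lemma localCohomology_zero_map_surjective {M N : ModuleCat.{u} R} (hM : IsPowTorsion J M)
    {g : M ⟶ N} (hg : Function.Surjective g) :
    Function.Surjective ((localCohomology J 0).map g) := fun x ↦ by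
  obtain ⟨s, e, rfl⟩ := exists_extToLocalCohomology_eq x
  obtain ⟨δ, rfl⟩ := (Abelian.Ext.mk₀_bijective _ _).2 e
  obtain ⟨y, hy⟩ := hg (δ (Submodule.Quotient.mk 1))
  obtain ⟨t, ht⟩ := hM y
  let ε : quotientPow J (s + t) ⟶ M := ModuleCat.ofHom <|
    Submodule.liftQ _ (LinearMap.toSpanSingleton R M y) fun r hr ↦
      ht r (Ideal.pow_le_pow_right (Nat.le_add_left t s) hr)
  have hε : ε ≫ g = quotientPowMap J (Nat.le_add_right s t) ≫ δ := by
    refine ModuleCat.hom_ext (Submodule.linearMap_qext _ (LinearMap.ext_ring ?_))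
    change g ((1 : R) • y) = δ (Submodule.Quotient.mk 1)
    rw [one_smul, hy]
  refine ⟨extToLocalCohomology J M 0 (s + t) (.mk₀ ε), ?_⟩
  rw [map_extToLocalCohomology, Abelian.Ext.mk₀_comp_mk₀, hε, ← Abelian.Ext.mk₀_comp_mk₀,
    extToLocalCohomology_mk₀_comp]

variable [IsNoetherianRing R]

lemma exists_injective_isPowTorsion {M : ModuleCat.{u} R} (hM : IsPowTorsion J M) :
    ∃ (E : ModuleCat.{u} R) (f : M ⟶ E),
      Injective E ∧ IsPowTorsion J E ∧ Function.Injective f := by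
  let E : ModuleCat.{u} R := Injective.under M
  have : Injective (ModuleCat.of R E) := inferInstanceAs (Injective (Injective.under M))
  have := Module.injective_module_of_injective_object R E
  refine ⟨.of R (powTorsion J E), ModuleCat.ofHom ((Injective.ι M).hom.codRestrict _ fun x ↦
    (hM x).imp fun t ht r hr ↦ by rw [← map_smul, ht r hr, map_zero]),
    Module.injective_object_of_injective_module R _, isPowTorsion_powTorsion J E, ?_⟩
  exact fun x y hxy ↦ (ModuleCat.mono_iff_injective (Injective.ι M)).1 inferInstance
    (congrArg Subtype.val hxy)

theorem subsingleton_localCohomology_of_isPowTorsion {M : ModuleCat.{u} R}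
    (hM : IsPowTorsion J M) (i : ℕ) : Subsingleton ((localCohomology J (i + 1)).obj M) := by
  induction i using Nat.strong_induction_on generalizing M with | _ i ih =>
  obtain ⟨E, f, _, hE, hf⟩ := exists_injective_isPowTorsion hM
  have hS := shortExact_ofHom (LinearMap.exact_map_mkQ_range f.hom) hf (Submodule.mkQ_surjective _)
  have hg : Function.Surjective ((localCohomology J i).map
      (ModuleCat.ofHom (LinearMap.range f.hom).mkQ)) := by
    rcases i with - | i
    · exact localCohomology_zero_map_surjective hE (Submodule.mkQ_surjective _)
    · have := ih i i.lt_succ_self (M := .of R (E ⧸ LinearMap.range f.hom))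
        (hE.of_surjective (Submodule.mkQ_surjective _))
      exact Function.surjective_to_subsingleton _
  have := subsingleton_localCohomology_of_injective (J := J) (M := E) (i := i)
  exact (localCohomology_map_injective hS hg).subsingleton

variable {A B C : Type u} [AddCommGroup A] [Module R A] [AddCommGroup B] [Module R B]
  [AddCommGroup C] [Module R C] {f : A →ₗ[R] B} {g : B →ₗ[R] C} {i : ℕ}

lemma localCohomology_map_surjective_of_ker (hf : Function.Surjective f)
    (hk : IsPowTorsion J (LinearMap.ker f)) :
    Function.Surjective ((localCohomology J i).map (ModuleCat.ofHom f)) := by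
  have := subsingleton_localCohomology_of_isPowTorsion (M := .of R (LinearMap.ker f)) hk i
  exact localCohomology_map_surjective
    (shortExact_ofHom f.exact_subtype_ker_map (Submodule.subtype_injective _) hf)
    (Function.injective_of_subsingleton _)

lemma localCohomology_map_rangeRestrict_surjective (hk : IsPowTorsion J (LinearMap.ker f)) :
    Function.Surjective ((localCohomology J i).map (ModuleCat.ofHom f.rangeRestrict)) :=
  localCohomology_map_surjective_of_ker f.surjective_rangeRestrict
    (by rwa [LinearMap.ker_rangeRestrict])

lemma localCohomology_map_surjective_right_of_exact (h : Function.Exact f g)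
    (hg : Function.Surjective g) (hk : IsPowTorsion J (LinearMap.ker f))
    (hA : Subsingleton ((localCohomology J (i + 1)).obj (.of R A))) :
    Function.Surjective ((localCohomology J i).map (ModuleCat.ofHom g)) := by
  have : Subsingleton ((localCohomology J (i + 1)).obj (.of R (LinearMap.range f))) :=
    (localCohomology_map_rangeRestrict_surjective hk).subsingleton
  exact localCohomology_map_surjective (shortExact_range_subtype h hg)
    (Function.injective_of_subsingleton _)

lemma localCohomology_map_surjective_left_of_exact (h : Function.Exact f g)
    (hg : Function.Surjective g) (hk : IsPowTorsion J (LinearMap.ker f))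
    (hC : Subsingleton ((localCohomology J i).obj (.of R C))) :
    Function.Surjective ((localCohomology J i).map (ModuleCat.ofHom f)) := fun x ↦ by
  obtain ⟨y, rfl⟩ := (localCohomology_exact (shortExact_range_subtype h hg) x).1
    (Subsingleton.elim (α := (localCohomology J i).obj (.of R C)) _ _)
  obtain ⟨z, rfl⟩ := localCohomology_map_rangeRestrict_surjective hk y
  refine ⟨z, ?_⟩
  rw [← ConcreteCategory.comp_apply, ← Functor.map_comp]
  rfl

end TorsionModules

section LinearFunctor

variable {R : Type u} [CommRing R]

lemma eq_sum_smulRight_coord {ι L L' : Type*} [Fintype ι] [AddCommGroup L] [Module R L]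
    [AddCommGroup L'] [Module R L'] (b : Module.Basis ι R L) (f : L →ₗ[R] L') :
    f = ∑ k, (b.coord k).smulRight (f (b k)) := by
  classical
  exact b.ext fun j ↦ by simp [LinearMap.sum_apply, Finsupp.single_apply, ite_smul]

lemma mem_smul_top_of_range_le {J : Ideal R} {L L' : Type*} [AddCommGroup L] [Module R L]
    [AddCommGroup L'] [Module R L'] [Module.Free R L] [Module.Finite R L] {f : L →ₗ[R] L'}
    (hf : LinearMap.range f ≤ J • ⊤) : f ∈ J • (⊤ : Submodule R (L →ₗ[R] L')) := by
  let b := Module.Free.chooseBasis R L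
  rw [eq_sum_smulRight_coord b f]
  refine sum_mem fun k _ ↦ ?_
  have hk := Submodule.mem_map_of_mem (f := LinearMap.smulRightₗ (b.coord k)) (hf ⟨b k, rfl⟩)
  rw [Submodule.map_smul''] at hk
  exact Submodule.smul_mono le_rfl le_top hk

lemma subsingleton_of_pow_le_annihilator {J : Ideal R} {V : Type*} [AddCommGroup V] [Module R V]
    {t : ℕ} (ht : J ^ t ≤ Module.annihilator R V) (h : (⊤ : Submodule R V) ≤ J • ⊤) :
    Subsingleton V := by
  have hpow (m : ℕ) : (⊤ : Submodule R V) ≤ J ^ m • ⊤ := by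
    induction m with
    | zero => simp
    | succ m ih =>
      rw [pow_succ, Submodule.mul_smul]
      exact ih.trans (Submodule.smul_mono le_rfl h)
  have hbot : J ^ t • (⊤ : Submodule R V) = ⊥ := by
    rwa [← Submodule.le_annihilator_iff, Submodule.annihilator_top]
  exact (Submodule.subsingleton_iff R).1
    (subsingleton_of_bot_eq_top (le_antisymm bot_le (hbot ▸ hpow t)))

variable (F : ModuleCat.{u} R ⥤ ModuleCat.{u} R) [F.Linear R]

lemma smul_eq_zero_of_comp_eq_smul_id {A Q : ModuleCat.{u} R} [Subsingleton (F.obj A)] {r : R}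
    {f : Q ⟶ A} {g : A ⟶ Q} (h : f ≫ g = r • 𝟙 Q) (x : F.obj Q) : r • x = 0 := by
  have hF : r • 𝟙 (F.obj Q) = F.map f ≫ F.map g := by
    rw [← Functor.map_comp, h, Functor.map_smul, CategoryTheory.Functor.map_id]
  refine (congrArg (fun φ ↦ φ.hom x) hF).trans ?_
  exact (congrArg (F.map g) (Subsingleton.elim (F.map f x) 0)).trans (map_zero (F.map g).hom)

variable {L L' : Type u} [AddCommGroup L] [Module R L] [AddCommGroup L'] [Module R L']

lemma subsingleton_functor_obj_of_free [Module.Free R L] [Nontrivial L]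
    [Subsingleton (F.obj (.of R L))] : Subsingleton (F.obj (.of R R)) := by
  let b := Module.Free.chooseBasis R L
  obtain ⟨k⟩ := b.index_nonempty
  have hb : ModuleCat.ofHom (LinearMap.toSpanSingleton R L (b k)) ≫ ModuleCat.ofHom (b.coord k) =
      (1 : R) • 𝟙 _ := by
    ext
    simp
  refine subsingleton_of_forall_eq 0 fun x ↦ ?_
  rw [← one_smul R x, smul_eq_zero_of_comp_eq_smul_id F hb]

variable [F.Additive]

/-- For an `R`-linear functor `F`, the map sending `f : L →ₗ[R] L'` to the value of `F f` at a
fixed element of `F L`. -/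
def functorMapApply (x : F.obj (.of R L)) : (L →ₗ[R] L') →ₗ[R] F.obj (.of R L') where
  toFun f := F.map (ModuleCat.ofHom f) x
  map_add' f g := by rw [ModuleCat.ofHom_add, Functor.map_add]; rfl
  map_smul' r f := congrArg (fun φ ↦ φ.hom x) (F.map_smul r (ModuleCat.ofHom f))

lemma functorMapApply_smulRight (x : F.obj (.of R L)) (f : L →ₗ[R] R) (y : L') :
    functorMapApply F x (f.smulRight y) =
      F.map (ModuleCat.ofHom (LinearMap.toSpanSingleton R L' y)) (F.map (ModuleCat.ofHom f) x) := by
  rw [← ConcreteCategory.comp_apply, ← Functor.map_comp]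
  rfl

lemma annihilator_functor_obj_le [Module.Free R L] [Module.Finite R L] :
    Module.annihilator R (F.obj (.of R R)) ≤ Module.annihilator R (F.obj (.of R L)) := by
  intro r hr
  refine Module.mem_annihilator.2 fun x ↦ ?_
  have hx : x = functorMapApply F x LinearMap.id :=
    (congrArg (fun f ↦ f.hom x) (F.map_id (.of R L))).symm
  rw [hx, eq_sum_smulRight_coord (Module.Free.chooseBasis R L) LinearMap.id, map_sum,
    Finset.smul_sum]
  refine Finset.sum_eq_zero fun k _ ↦ ?_
  rw [functorMapApply_smulRight, ← map_smul, Module.mem_annihilator.1 hr, map_zero]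

lemma range_functor_map_le {J : Ideal R} [Module.Free R L] [Module.Finite R L] {d : L →ₗ[R] L'}
    (hd : LinearMap.range d ≤ J • ⊤) :
    LinearMap.range (F.map (ModuleCat.ofHom d)).hom ≤ J • ⊤ := by
  rintro _ ⟨x, rfl⟩
  have hx := Submodule.mem_map_of_mem (f := functorMapApply F x) (mem_smul_top_of_range_le hd)
  rw [Submodule.map_smul''] at hx
  exact Submodule.smul_mono le_rfl le_top hx

theorem not_surjective_functor_map {J : Ideal R} [Module.Free R L] [Module.Finite R L]
    [Module.Free R L'] [Module.Finite R L'] [Nontrivial L'] {d : L →ₗ[R] L'}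
    (hd : LinearMap.range d ≤ J • ⊤) {M : ModuleCat.{u} R} (e : F.obj (.of R R) ≅ M) {t : ℕ}
    (ht : J ^ t ≤ Module.annihilator R M) (hM : ¬ Subsingleton M) :
    ¬ Function.Surjective (F.map (ModuleCat.ofHom d)) := fun hsurj ↦ by
  rw [← e.toLinearEquiv.annihilator_eq] at ht
  have := subsingleton_of_pow_le_annihilator (ht.trans (annihilator_functor_obj_le F (L := L')))
    ((LinearMap.range_eq_top.2 hsurj).ge.trans (range_functor_map_le F hd))
  have := subsingleton_functor_obj_of_free F (L := L')
  exact hM e.toLinearEquiv.symm.subsingleton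

end LinearFunctor

section Splitting

variable {R : Type*} [CommRing R] {F Q : Type*} [AddCommGroup F] [Module R F] [AddCommGroup Q]
  [Module R Q]

/-- The ideal of scalars `s` such that multiplication by `s` on `Q` factors through
`π : F →ₗ[R] Q`; it measures the failure of `π` to split. -/
def splittingIdeal (π : F →ₗ[R] Q) : Ideal R :=
  (LinearMap.range (LinearMap.compRight R π)).comap
    (LinearMap.toSpanSingleton R (Q →ₗ[R] Q) LinearMap.id)

lemma mem_splittingIdeal {π : F →ₗ[R] Q} {s : R} :
    s ∈ splittingIdeal π ↔ ∃ u : Q →ₗ[R] F, π ∘ₗ u = s • LinearMap.id :=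
  Iff.rfl

lemma exists_mem_splittingIdeal (S : Submonoid R) [Module.FinitePresentation R Q]
    [Module.Projective (Localization S) (LocalizedModule S Q)] {π : F →ₗ[R] Q}
    (hπ : Function.Surjective π) : ∃ s ∈ S, s ∈ splittingIdeal π := by
  obtain ⟨g, hg⟩ := Module.projective_lifting_property (LocalizedModule.map S π) LinearMap.id
    (LocalizedModule.map_surjective S π hπ)
  obtain ⟨⟨u, s⟩, hu : s • g = LocalizedModule.map S u⟩ :=
    IsLocalizedModule.surj S (LocalizedModule.map S) g
  have hmap : LocalizedModule.map S (π ∘ₗ u) = LocalizedModule.map S (s • LinearMap.id) := by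
    calc LocalizedModule.map S (π ∘ₗ u)
        = LocalizedModule.map S π ∘ₗ LocalizedModule.map S u := by
          ext x
          induction x with
          | h m t => simp [LocalizedModule.map_mk]
      _ = s • (LocalizedModule.map S π ∘ₗ g) := by rw [← hu, LinearMap.comp_smul]
      _ = LocalizedModule.map S (s • LinearMap.id) := by
          rw [hg, ← LocalizedModule.map_id]
          exact (map_smul (LocalizedModule.map S) s.1 LinearMap.id).symm
  obtain ⟨t, ht⟩ := (IsLocalizedModule.eq_iff_exists S (LocalizedModule.map S)).1 hmap
  refine ⟨t * s, S.mul_mem t.2 s.2, mem_splittingIdeal.2 ⟨t • u, ?_⟩⟩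
  rw [mul_smul]
  exact (LinearMap.comp_smul _ _ _).trans ht

lemma exists_pow_le_splittingIdeal [IsNoetherianRing R] [Module.Finite R Q] {π : F →ₗ[R] Q}
    (hπ : Function.Surjective π) {J : Ideal R}
    (h : ∀ p : PrimeSpectrum R, ¬ J ≤ p.asIdeal →
      Module.Free (Localization.AtPrime p.asIdeal) (LocalizedModule p.asIdeal.primeCompl Q)) :
    ∃ t : ℕ, J ^ t ≤ splittingIdeal π := by
  have := Module.finitePresentation_of_finite R Q
  refine Ideal.exists_pow_le_of_le_radical_of_fg ?_ (IsNoetherian.noetherian J)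
  rw [Ideal.radical_eq_sInf]
  refine le_sInf fun p ⟨hle, hp⟩ ↦ ?_
  by_contra hJ
  have := h ⟨p, hp⟩ hJ
  obtain ⟨s, hs, hsπ⟩ := exists_mem_splittingIdeal p.primeCompl hπ
  exact hs (hle hsπ)

end Splitting

theorem exists_pow_le_annihilator_localCohomology {R : Type u} [CommRing R] [IsNoetherianRing R]
    {J : Ideal R} {Q : Type u} [AddCommGroup Q] [Module R Q] [Module.Finite R Q]
    (h : ∀ p : PrimeSpectrum R, ¬ J ≤ p.asIdeal →
      Module.Free (Localization.AtPrime p.asIdeal) (LocalizedModule p.asIdeal.primeCompl Q))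
    (i : ℕ) [Subsingleton ((localCohomology J i).obj (.of R R))] :
    ∃ t : ℕ, J ^ t ≤ Module.annihilator R ((localCohomology J i).obj (.of R Q)) := by
  obtain ⟨m, π, hπ⟩ := Module.Finite.exists_fin' R Q
  obtain ⟨t, ht⟩ := exists_pow_le_splittingIdeal hπ h
  have hfree : Subsingleton ((localCohomology J i).obj (.of R (Fin m → R))) := by
    refine (Module.annihilator_eq_top_iff (R := R)).1 (top_le_iff.1 ?_)
    exact (Module.annihilator_eq_top_iff.2 ‹_›).ge.trans
      (annihilator_functor_obj_le (localCohomology J i) (L := Fin m → R))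
  refine ⟨t, fun s hs ↦ Module.mem_annihilator.2 fun x ↦ ?_⟩
  obtain ⟨u, hu⟩ := mem_splittingIdeal.1 (ht hs)
  exact smul_eq_zero_of_comp_eq_smul_id (localCohomology J i) (f := ModuleCat.ofHom u)
    (g := ModuleCat.ofHom π) (congrArg ModuleCat.ofHom hu) x

section Syzygy

variable {R : Type u} [CommRing R] {J : Ideal R}

lemma isPowTorsion_ker_rTensor {A B Q : Type*} [AddCommGroup A] [Module R A] [AddCommGroup B]
    [Module R B] [AddCommGroup Q] [Module R Q] {f : A →ₗ[R] B} {c : ℕ}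
    (h : ∀ s ∈ J ^ c, ∃ ρ : B →ₗ[R] A, ρ ∘ₗ f = s • LinearMap.id) :
    IsPowTorsion J (LinearMap.ker (LinearMap.rTensor Q f)) := fun x ↦ by
  refine ⟨c, fun s hs ↦ Subtype.ext ?_⟩
  obtain ⟨ρ, hρ⟩ := h s hs
  calc s • x.1 = LinearMap.rTensor Q (s • LinearMap.id) x.1 := by simp
    _ = LinearMap.rTensor Q ρ (LinearMap.rTensor Q f x.1) := by
      rw [← hρ, LinearMap.rTensor_comp_apply]
    _ = 0 := by rw [x.2, map_zero]

lemma le_annihilator_tensorProduct {I : Ideal R} {A Q : Type*} [AddCommGroup A] [Module R A]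
    [AddCommGroup Q] [Module R Q] (h : I ≤ Module.annihilator R A) :
    I ≤ Module.annihilator R (A ⊗[R] Q) := fun s hs ↦ Module.mem_annihilator.2 fun x ↦ by
  induction x with
  | zero => exact smul_zero s
  | tmul a q => rw [TensorProduct.smul_tmul', Module.mem_annihilator.1 (h hs),
      TensorProduct.zero_tmul]
  | add x y hx hy => rw [smul_add, hx, hy, add_zero]

section Scalars

variable {P L L' N : Type*} [AddCommGroup P] [Module R P] [AddCommGroup L] [Module R L]
  [AddCommGroup L'] [Module R L'] [AddCommGroup N] [Module R N] {ι : P →ₗ[R] L} {d : L →ₗ[R] L'}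
  {aug : L' →ₗ[R] N} {s : R}

lemma exists_subtype_comp_eq_smul_id (h : Function.Exact d aug)
    (hs : s ∈ Module.annihilator R N) :
    ∃ ρ : L' →ₗ[R] LinearMap.range d, (LinearMap.range d).subtype ∘ₗ ρ = s • LinearMap.id :=
  ⟨(s • LinearMap.id).codRestrict _ fun x ↦ (h (s • x)).1 <| by
    rw [map_smul, Module.mem_annihilator.1 hs], rfl⟩

lemma exists_comp_subtype_eq_smul_id (h : Function.Exact d aug)
    (hs : s ∈ Module.annihilator R N) :
    ∃ ρ : L' →ₗ[R] LinearMap.range d, ρ ∘ₗ (LinearMap.range d).subtype = s • LinearMap.id := by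
  obtain ⟨ρ, hρ⟩ := exists_subtype_comp_eq_smul_id h hs
  exact ⟨ρ, LinearMap.ext fun x ↦ Subtype.ext (LinearMap.congr_fun hρ x.1)⟩

lemma exists_comp_eq_smul_id_of_exact [Module.Projective R L'] (hι : Function.Injective ι)
    (h : Function.Exact ι d) (h' : Function.Exact d aug) (hs : s ∈ Module.annihilator R N) :
    ∃ ρ : L →ₗ[R] P, ρ ∘ₗ ι = s • LinearMap.id := by
  obtain ⟨τ, hτ⟩ := exists_subtype_comp_eq_smul_id h' hs
  obtain ⟨σ, hσ⟩ := Module.projective_lifting_property d.rangeRestrict τ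
    d.surjective_rangeRestrict
  have hdσ : d ∘ₗ σ = s • LinearMap.id := by rw [← hτ, ← hσ]; rfl
  have hmem (x : L) : (s • LinearMap.id - σ ∘ₗ d : L →ₗ[R] L) x ∈ LinearMap.range ι :=
    (h _).1 <| by simpa [sub_eq_zero] using (LinearMap.congr_fun hdσ (d x)).symm
  refine ⟨LinearMap.codRestrictOfInjective _ ι hι hmem, LinearMap.ext fun x ↦ hι ?_⟩
  simp [h.apply_apply_eq_zero]

end Scalars

variable [IsNoetherianRing R] {P L L' N Q : Type u} [AddCommGroup P] [Module R P] [AddCommGroup L]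
  [Module R L] [AddCommGroup L'] [Module R L'] [AddCommGroup N] [Module R N] [AddCommGroup Q]
  [Module R Q] {ι : P →ₗ[R] L} {d : L →ₗ[R] L'} {aug : L' →ₗ[R] N}

lemma localCohomology_map_rTensor_surjective [Module.Projective R L'] (hι : Function.Injective ι)
    (h : Function.Exact ι d) (h' : Function.Exact d aug) (haug : Function.Surjective aug) {c : ℕ}
    (hc : J ^ c ≤ Module.annihilator R N) {i : ℕ}
    (hP : Subsingleton ((localCohomology J (i + 2)).obj (.of R (P ⊗[R] Q)))) :
    Function.Surjective
      ((localCohomology J (i + 1)).map (ModuleCat.ofHom (LinearMap.rTensor Q d))) := by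
  have hd : Function.Exact ι d.rangeRestrict := fun x ↦ Subtype.ext_iff.trans (h x)
  have hZ : Function.Exact (LinearMap.range d).subtype aug := by
    rwa [LinearMap.exact_iff, Submodule.range_subtype, ← LinearMap.exact_iff]
  have hN : Subsingleton ((localCohomology J (i + 1)).obj (.of R (N ⊗[R] Q))) :=
    subsingleton_localCohomology_of_isPowTorsion
      (isPowTorsion_of_pow_le_annihilator (le_annihilator_tensorProduct hc)) i
  have hright := localCohomology_map_surjective_right_of_exact
    (rTensor_exact Q hd d.surjective_rangeRestrict)
    (LinearMap.rTensor_surjective Q d.surjective_rangeRestrict)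
    (isPowTorsion_ker_rTensor fun s hs ↦ exists_comp_eq_smul_id_of_exact hι h h' (hc hs)) hP
  have hleft := localCohomology_map_surjective_left_of_exact (rTensor_exact Q hZ haug)
    (LinearMap.rTensor_surjective Q haug)
    (isPowTorsion_ker_rTensor fun s hs ↦ exists_comp_subtype_eq_smul_id h' (hc hs)) hN
  have hcomp : ModuleCat.ofHom (LinearMap.rTensor Q d) =
      ModuleCat.ofHom (LinearMap.rTensor Q d.rangeRestrict) ≫
        ModuleCat.ofHom (LinearMap.rTensor Q (LinearMap.range d).subtype) := by
    rw [← ModuleCat.ofHom_comp, ← LinearMap.rTensor_comp]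
    rfl
  rw [hcomp, Functor.map_comp]
  exact hleft.comp hright

theorem jyotilingam_k_one_general [Module.Free R L] [Module.Finite R L] [Module.Free R L']
    [Module.Finite R L'] [Nontrivial N] (hι : Function.Injective ι) (h : Function.Exact ι d)
    (h' : Function.Exact d aug) (haug : Function.Surjective aug)
    (hd : LinearMap.range d ≤ J • ⊤) {c : ℕ} (hc : J ^ c ≤ Module.annihilator R N)
    [Module.Finite R Q] (hQ : ∀ p : PrimeSpectrum R, ¬ J ≤ p.asIdeal →
      Module.Free (Localization.AtPrime p.asIdeal) (LocalizedModule p.asIdeal.primeCompl Q))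
    {i : ℕ} [Subsingleton ((localCohomology J (i + 1)).obj (.of R R))]
    (hM : ¬ Subsingleton ((localCohomology J (i + 1)).obj (.of R Q))) :
    ¬ Function.Surjective
      (LinearMap.rTensor ((localCohomology J (i + 1)).obj (.of R Q)) d) ∧
    ¬ Subsingleton ((localCohomology J (i + 2)).obj (.of R (P ⊗[R] Q))) := by
  have := haug.nontrivial
  obtain ⟨t, ht⟩ := exists_pow_le_annihilator_localCohomology hQ (i + 1)
  let M := (localCohomology J (i + 1)).obj (.of R Q)
  refine ⟨not_surjective_functor_map (MonoidalCategory.tensorRight M) hd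
    (MonoidalCategory.leftUnitor M) ht hM, fun hP ↦ ?_⟩
  exact not_surjective_functor_map
    (MonoidalCategory.tensorRight (ModuleCat.of R Q) ⋙ localCohomology J (i + 1)) hd
    ((localCohomology J (i + 1)).mapIso (MonoidalCategory.leftUnitor (ModuleCat.of R Q))) ht hM
    (localCohomology_map_rTensor_surjective hι h h' haug hc hP)

end Syzygy

/-- Jyotilingam's theorem for `k = 1`.  If `N` is a (nonzero)
finite length graded `S`-module with first syzygy bundle `P₁` and `Q` is a bundle
on `ℙⁿ` with `M = H^l_*(Q) ≠ 0`, `1 ≤ l ≤ n-2`, then the map `L₁ ⊗ M → L₀ ⊗ M`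
induced by the resolution of `N` is not surjective, and hence
`H^{l+1}_*(P₁ ⊗ Q) ≠ 0`. -/
theorem jyotilingam_k_one
    (K : Type) [Field K] (n : ℕ)
    (N : Type) [AddCommGroup N] [Module (PolyS K n) N]
    (hN : Nontrivial N)
    (hNfl : IsGradedFiniteLength K n N)
    (res : MinimalResolution K n N)
    (Q : Type) [AddCommGroup Q] [Module (PolyS K n) Q]
    (hQ : IsBundleModule K n Q)
    (l : ℕ) (hl1 : 1 ≤ l) (hl2 : l ≤ n - 2)
    (hM : ¬ Subsingleton (Hstar K n l Q)) :
    ¬ Function.Surjective (LinearMap.rTensor ↥(Hstar K n l Q) (res.d 0)) ∧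
    ¬ Subsingleton (Hstar K n (l+1)
      (TensorProduct (PolyS K n) ↥(LinearMap.range (res.d 1)) Q)) := by
  have := hQ.finite
  have := res.free
  have := res.finite
  obtain ⟨c, hc⟩ := hNfl.2
  have hS : Subsingleton ((localCohomology (irrel K n) (l + 1)).obj (.of _ (PolyS K n))) :=
    subsingleton_localCohomology_of_X_mem (J := irrel K n)
      (fun k ↦ Ideal.subset_span ⟨k, rfl⟩) (by rw [Fintype.card_fin]; omega)
  exact jyotilingam_k_one_general (Submodule.subtype_injective _)
    (by rw [LinearMap.exact_iff, Submodule.range_subtype, res.exact 0])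
    (LinearMap.exact_iff.2 res.exact0.symm) res.aug_surjective (res.minimal 0) hc
    (fun p hp ↦ hQ.locFree p fun h ↦ hp h.ge) hM
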